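/- arXiv:2002.05855 — 3 statements merged into one kernel-verified Lean document; each statement's English description precedes it below -/
import Mathlib

section
/- Let u ≤ w in S_n and let 1 ≤ i < k ≤ n. If (u(i),u(k)) ∈ E_w(u)^+, then there is no j with i < j < k and u(i) < u(j) < u(k). Similarly, if (u(i),u(k)) ∈ E_w(u)^−, then there is no j with i < j < k and u(i) > u(j) > u(k). -/
open Equiv

/-- The length (number of inversions) of a permutation of `Fin n`. -/
def invLen {n : ℕ} (u : Equiv.Perm (Fin n)) : ℕ :=
  (Finset.univ.filter (fun p : Fin n × Fin n => p.1 < p.2 ∧ u p.2 < u p.1)).card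

/-- A permutation is a transposition if it swaps two distinct elements. -/
def IsTransposition {n : ℕ} (σ : Equiv.Perm (Fin n)) : Prop :=
  ∃ a b : Fin n, a ≠ b ∧ σ = Equiv.swap a b

/-- Bruhat order on permutations: `v ≤ w` iff `w` is obtained from `v` by left
multiplication by transpositions, each strictly increasing the length. -/
def BruhatLE {n : ℕ} (v w : Equiv.Perm (Fin n)) : Prop :=
  ∃ (m : ℕ) (c : ℕ → Equiv.Perm (Fin n)),
    c 0 = v ∧ c m = w ∧
    ∀ k, k < m →
      (∃ τ : Equiv.Perm (Fin n), IsTransposition τ ∧ c (k + 1) = τ * c k) ∧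
      invLen (c k) < invLen (c (k + 1))

/-- The edge set `Ẽ_w(u)`. -/
def Etilde {n : ℕ} (w u : Equiv.Perm (Fin n)) : Set (Fin n × Fin n) :=
  { p | ∃ i j : Fin n, i < j ∧ p = (u i, u j) ∧
      BruhatLE (Equiv.swap (u i) (u j) * u) w ∧
      |(invLen (Equiv.swap (u i) (u j) * u) : ℤ) - (invLen u : ℤ)| = 1 }

/-- The transitive reduction `E_w(u)` of `Ẽ_w(u)`: edges `(a,b)` of `Ẽ_w(u)` such that
there is no directed path from `a` to `b` in `Ẽ_w(u)` using at least two edges. -/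
def Ered {n : ℕ} (w u : Equiv.Perm (Fin n)) : Set (Fin n × Fin n) :=
  { p | p ∈ Etilde w u ∧
      ¬ ∃ c : Fin n, (p.1, c) ∈ Etilde w u ∧
        Relation.TransGen (fun a b : Fin n => (a, b) ∈ Etilde w u) c p.2 }

/-- `E_w(u)^+`: edges `(a,b)` of `E_w(u)` with `a < b`. -/
def Eplus {n : ℕ} (w u : Equiv.Perm (Fin n)) : Set (Fin n × Fin n) :=
  { p ∈ Ered w u | p.1 < p.2 }

/-- `E_w(u)^-`: edges `(a,b)` of `E_w(u)` with `a > b`. -/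
def Eminus {n : ℕ} (w u : Equiv.Perm (Fin n)) : Set (Fin n × Fin n) :=
  { p ∈ Ered w u | p.2 < p.1 }

/-- The moment-map image `μ(u) = (u⁻¹(1), …, u⁻¹(n)) ∈ ℝⁿ`
(using values `1, …, n`, i.e. `Fin.val + 1`). -/
def mu {n : ℕ} (u : Equiv.Perm (Fin n)) : Fin n → ℝ :=
  fun k => ((u⁻¹ k : ℕ) : ℝ) + 1

/-- The standard basis vector `e_a` of `ℝⁿ`. -/
def stdB {n : ℕ} (a : Fin n) : Fin n → ℝ :=
  fun k => if k = a then 1 else 0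



lemma invLen_add_two_le {n : ℕ} (u : Equiv.Perm (Fin n)) (i j k : Fin n)
    (hij : i < j) (hjk : j < k) (h1 : u i < u j) (h2 : u j < u k) :
    invLen u + 2 ≤ invLen (Equiv.swap (u i) (u k) * u) := by
  classical
  set v := Equiv.swap (u i) (u k) * u with hv
  have vi : v i = u k := by simp [hv]
  have vk : v k = u i := by simp [hv]
  have vo : ∀ x, x ≠ i → x ≠ k → v x = u x := by
    intro x hx hx'
    simp only [hv, Equiv.Perm.mul_apply]
    exact Equiv.swap_apply_of_ne_of_ne (u.injective.ne hx) (u.injective.ne hx')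
  set s := Equiv.swap i k with hs
  have si : s i = k := by simp [hs]
  have sk : s k = i := by simp [hs]
  have so : ∀ x, x ≠ i → x ≠ k → s x = x := by
    intro x hx hx'
    exact Equiv.swap_apply_of_ne_of_ne hx hx'
  have ss : ∀ x, s (s x) = x := by intro x; simp [hs]
  have vs : ∀ x, v (s x) = u x := by
    intro x
    by_cases hx : x = i
    · subst hx; rw [si, vk]
    by_cases hx' : x = k
    · subst hx'; rw [sk, vi]
    rw [so x hx hx', vo x hx hx']
  let f : Fin n × Fin n → Fin n × Fin n := fun p => if s p.1 < s p.2 then (s p.1, s p.2) else p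
  set A := Finset.univ.filter (fun p : Fin n × Fin n => p.1 < p.2 ∧ u p.2 < u p.1) with hA
  have hAu : invLen u = A.card := rfl
  have hinj : Set.InjOn f A := by
    rintro ⟨a, b⟩ hab ⟨c, d⟩ hcd h
    simp only [hA, Finset.coe_filter, Finset.mem_univ, true_and, Set.mem_setOf_eq] at hab hcd
    simp only [f] at h
    split_ifs at h with g1 g2 g2
    · simpa using h
    · simp only [Prod.mk.injEq] at h
      rw [← h.1, ← h.2, ss, ss] at g2
      exact absurd hab.1 g2
    · simp only [Prod.mk.injEq] at h
      rw [h.1, h.2, ss, ss] at g1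
      exact absurd hcd.1 g1
    · exact h
  have hnot : ∀ y : Fin n × Fin n, (y = (i, k) ∨ y = (i, j)) → y ∉ A.image f := by
    intro y hy hm
    obtain ⟨⟨a, b⟩, hab, h⟩ := Finset.mem_image.1 hm
    simp only [hA, Finset.mem_filter, Finset.mem_univ, true_and] at hab
    have sj := so j hij.ne' hjk.ne
    simp only [f] at h
    split_ifs at h with g1
    · have ha := ss a
      have hb := ss b
      rcases hy with rfl | rfl <;> simp only [Prod.mk.injEq] at h <;> rw [h.1] at ha <;>
        rw [h.2] at hb <;> grind
    · rcases hy with rfl | rfl <;> simp only [Prod.mk.injEq] at h <;> grind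
  have hsub : insert (i, k) (insert (i, j) (A.image f)) ⊆
      Finset.univ.filter (fun p : Fin n × Fin n => p.1 < p.2 ∧ v p.2 < v p.1) := by
    intro y hy
    have vj := vo j hij.ne' hjk.ne
    simp only [Finset.mem_insert, Finset.mem_filter, Finset.mem_univ, true_and] at hy ⊢
    rcases hy with rfl | rfl | hy
    · simp only [vi, vk]; exact ⟨hij.trans hjk, h1.trans h2⟩
    · simp only [vi, vj]; exact ⟨hij, h2⟩
    · obtain ⟨⟨a, b⟩, hab, rfl⟩ := Finset.mem_image.1 hy
      simp only [hA, Finset.mem_filter, Finset.mem_univ, true_and] at hab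
      simp only [f]
      split_ifs with g1
      · simp only [vs]; exact ⟨g1, hab.2⟩
      · refine ⟨hab.1, ?_⟩
        obtain ⟨hab1, hab2⟩ := hab
        simp only at hab1 hab2 g1 ⊢
        clear_value v s
        by_cases ha : a = i <;> by_cases hb : b = k <;> by_cases ha' : a = k <;>
          by_cases hb' : b = i <;> grind
  have hc := Finset.card_le_card hsub
  rw [Finset.card_insert_of_notMem, Finset.card_insert_of_notMem (hnot _ (Or.inr rfl)),
    Finset.card_image_of_injOn hinj] at hc
  · rw [hAu]; exact hc
  · intro h
    rcases Finset.mem_insert.1 h with h | h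
    · simp only [Prod.mk.injEq] at h
      exact hjk.ne' h.2
    · exact hnot _ (Or.inl rfl) h

theorem stmt2 {n : ℕ} (hn : 1 ≤ n) (w u : Equiv.Perm (Fin n)) (hle : BruhatLE u w)
    (i k : Fin n) (hik : i < k) :
    (((u i, u k) : Fin n × Fin n) ∈ Eplus w u →
      ¬ ∃ j : Fin n, i < j ∧ j < k ∧ u i < u j ∧ u j < u k) ∧
    (((u i, u k) : Fin n × Fin n) ∈ Eminus w u →
      ¬ ∃ j : Fin n, i < j ∧ j < k ∧ u j < u i ∧ u k < u j) := by
  have key : ((u i, u k) : Fin n × Fin n) ∈ Etilde w u →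
      |(invLen (Equiv.swap (u i) (u k) * u) : ℤ) - (invLen u : ℤ)| = 1 := by
    rintro ⟨a, b, -, hp, -, h⟩
    simp only [Prod.mk.injEq] at hp
    rwa [hp.1, hp.2]
  constructor
  · rintro ⟨⟨h, -⟩, -⟩ ⟨j, hij, hjk, h1, h2⟩
    have := key h
    have := invLen_add_two_le u i j k hij hjk h1 h2
    grind
  · rintro ⟨⟨h, -⟩, -⟩ ⟨j, hij, hjk, h1, h2⟩
    have h3 := key h
    have vi : (Equiv.swap (u i) (u k) * u) i = u k := by simp
    have vk : (Equiv.swap (u i) (u k) * u) k = u i := by simp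
    have vj : (Equiv.swap (u i) (u k) * u) j = u j :=
      Equiv.swap_apply_of_ne_of_ne h1.ne h2.ne'
    have h4 := invLen_add_two_le (Equiv.swap (u i) (u k) * u) i j k hij hjk
      (by rw [vi, vj]; exact h2) (by rw [vk, vj]; exact h1)
    rw [vi, vk, Equiv.swap_comm (u k) (u i), Equiv.swap_mul_self_mul] at h4
    grind
end

section
/- Let u ≤ w in S_n. If (a,b) ∈ E_w(u)^+ and (a,c) ∈ E_w(u)^+, then b = c. Similarly, if (a,c) ∈ E_w(u)^+ and (b,c) ∈ E_w(u)^+, then a = b. -/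
open Equiv

lemma invLen_sum {n : ℕ} (u : Equiv.Perm (Fin n)) :
    (invLen u : ℤ) = ∑ p : Fin n, ∑ q : Fin n, if p < q ∧ u q < u p then (1:ℤ) else 0 := by
  unfold invLen
  rw [Finset.card_filter]
  push_cast
  rw [← Finset.univ_product_univ, Finset.sum_product]

lemma invLen_swap {n : ℕ} (u : Equiv.Perm (Fin n)) (i j : Fin n) (hij : i < j)
    (hu : u i < u j) :
    (invLen (Equiv.swap (u i) (u j) * u) : ℤ) = invLen u + 1 +
      ∑ k ∈ (Finset.univ \ {i, j}),
        if i < k ∧ k < j ∧ u i < u k ∧ u k < u j then (2:ℤ) else 0 := by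
  have h1 : Equiv.swap (u i) (u j) * u = u * Equiv.swap i j := by
    rw [Equiv.mul_swap_eq_swap_mul]
  have h2 : (invLen (u * Equiv.swap i j) : ℤ) = ∑ p : Fin n, ∑ q : Fin n,
      if Equiv.swap i j p < Equiv.swap i j q ∧ u q < u p then (1:ℤ) else 0 := by
    rw [invLen_sum, ← Equiv.sum_comp (Equiv.swap i j)]
    refine Finset.sum_congr rfl fun p _ => ?_
    rw [← Equiv.sum_comp (Equiv.swap i j)]
    simp
  have hne : i ≠ j := hij.ne
  have key : ∀ f : Fin n → Fin n → ℤ, ∑ p, ∑ q, f p q =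
      f i i + f i j + f j i + f j j
      + ∑ k ∈ (Finset.univ \ {i, j}), (f i k + f j k + f k i + f k j)
      + ∑ p ∈ (Finset.univ \ {i, j}), ∑ q ∈ (Finset.univ \ {i, j}), f p q := by
    intro f
    have hs : ∀ g : Fin n → ℤ, ∑ p, g p = g i + g j + ∑ p ∈ (Finset.univ \ {i, j}), g p := by
      intro g
      rw [← Finset.sum_sdiff (Finset.subset_univ {i, j}), Finset.sum_pair hne]
      ring
    simp only [hs, Finset.sum_add_distrib]
    ring
  rw [h1, h2, invLen_sum, key, key]
  have e1 : ∑ p ∈ (Finset.univ \ {i, j}), ∑ q ∈ (Finset.univ \ {i, j}),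
      (if Equiv.swap i j p < Equiv.swap i j q ∧ u q < u p then (1:ℤ) else 0) =
      ∑ p ∈ (Finset.univ \ {i, j}), ∑ q ∈ (Finset.univ \ {i, j}),
      (if p < q ∧ u q < u p then (1:ℤ) else 0) := by
    refine Finset.sum_congr rfl fun p hp => Finset.sum_congr rfl fun q hq => ?_
    simp at hp hq
    rw [Equiv.swap_apply_of_ne_of_ne hp.1 hp.2, Equiv.swap_apply_of_ne_of_ne hq.1 hq.2]
  rw [e1]
  have e2 : ∀ k ∈ (Finset.univ \ {i, j} : Finset (Fin n)),
      ((if Equiv.swap i j i < Equiv.swap i j k ∧ u k < u i then (1:ℤ) else 0)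
      + (if Equiv.swap i j j < Equiv.swap i j k ∧ u k < u j then (1:ℤ) else 0)
      + (if Equiv.swap i j k < Equiv.swap i j i ∧ u i < u k then (1:ℤ) else 0)
      + (if Equiv.swap i j k < Equiv.swap i j j ∧ u j < u k then (1:ℤ) else 0))
      = ((if i < k ∧ u k < u i then (1:ℤ) else 0)
      + (if j < k ∧ u k < u j then (1:ℤ) else 0)
      + (if k < i ∧ u i < u k then (1:ℤ) else 0)
      + (if k < j ∧ u j < u k then (1:ℤ) else 0))
      + (if i < k ∧ k < j ∧ u i < u k ∧ u k < u j then (2:ℤ) else 0) := by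
    intro k hk
    simp at hk
    have a1 : u k ≠ u i := fun h => hk.1 (u.injective h)
    have a2 : u k ≠ u j := fun h => hk.2 (u.injective h)
    have a3 := hk.1
    have a4 := hk.2
    rw [Equiv.swap_apply_of_ne_of_ne hk.1 hk.2, Equiv.swap_apply_left, Equiv.swap_apply_right]
    generalize u k = x at *
    generalize u i = y at *
    generalize u j = z at *
    clear e1 key h1 h2 hk
    rcases lt_or_gt_of_ne a1 with b1 | b1 <;> rcases lt_or_gt_of_ne a2 with b2 | b2 <;>
    rcases lt_or_gt_of_ne a3 with b3 | b3 <;> rcases lt_or_gt_of_ne a4 with b4 | b4 <;>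
    first
    | (exfalso; omega)
    | simp [b1, b2, b3, b4, b1.not_gt, b2.not_gt, b3.not_gt, b4.not_gt]
  rw [Finset.sum_congr rfl e2, Finset.sum_add_distrib]
  simp [hij, hu, hij.not_gt, hu.not_gt]
  ring

lemma no_between {n : ℕ} (u : Equiv.Perm (Fin n)) (i j : Fin n) (hij : i < j)
    (hu : u i < u j)
    (h : |(invLen (Equiv.swap (u i) (u j) * u) : ℤ) - (invLen u : ℤ)| = 1)
    (k : Fin n) (h1 : i < k) (h2 : k < j) (h3 : u i < u k) (h4 : u k < u j) : False := by
  rw [invLen_swap u i j hij hu] at h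
  have := Finset.single_le_sum (f := fun k =>
      if i < k ∧ k < j ∧ u i < u k ∧ u k < u j then (2:ℤ) else 0)
      (s := Finset.univ \ {i, j}) (fun k _ => by split_ifs <;> norm_num)
      (a := k) (by simp [h1.ne', h2.ne])
  simp only [h1, h2, h3, h4, and_self, if_true] at this
  rw [abs_eq (by norm_num)] at h
  omega

lemma down_len {n : ℕ} (u : Equiv.Perm (Fin n)) (i j : Fin n) (hij : i < j)
    (hu : u j < u i) (h : ∀ k, i < k → k < j → u j < u k → u k < u i → False) :
    (invLen u : ℤ) = invLen (Equiv.swap (u i) (u j) * u) + 1 := by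
  have H := invLen_swap (Equiv.swap (u i) (u j) * u) i j hij (by simpa using hu)
  have e : Equiv.swap (u j) (u i) * (Equiv.swap (u i) (u j) * u) = u := by
    rw [Equiv.swap_comm, ← mul_assoc]; simp
  simp only [Equiv.Perm.mul_apply, Equiv.swap_apply_left, Equiv.swap_apply_right] at H
  rw [e] at H
  rw [H, Finset.sum_eq_zero, add_zero]
  intro k hk
  simp at hk
  rw [Equiv.swap_apply_of_ne_of_ne (by simpa using hk.1) (by simpa using hk.2)]
  rw [if_neg]
  rintro ⟨h1, h2, h3, h4⟩
  exact h k h1 h2 h3 h4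

lemma down_path {n : ℕ} (w u : Equiv.Perm (Fin n)) (hle : BruhatLE u w) (m : ℕ) :
    ∀ i j : Fin n, i < j → u j < u i → (j : ℕ) - i ≤ m →
    Relation.TransGen (fun a b : Fin n => (a, b) ∈ Etilde w u) (u i) (u j) := by
  induction m with
  | zero => intro i j hij; omega
  | succ m ih =>
    intro i j hij hu hm
    by_cases hk : ∃ k, i < k ∧ k < j ∧ u j < u k ∧ u k < u i
    · obtain ⟨k, h1, h2, h3, h4⟩ := hk
      exact (ih i k h1 h4 (by omega)).trans (ih k j h2 h3 (by omega))
    · have hd := down_len u i j hij hu (fun k h1 h2 h3 h4 => hk ⟨k, h1, h2, h3, h4⟩)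
      refine Relation.TransGen.single ⟨i, j, hij, rfl, ?_, ?_⟩
      · obtain ⟨m, c, h0, hm, hc⟩ := hle
        refine ⟨m + 1, fun k => Nat.casesOn k (Equiv.swap (u i) (u j) * u) c, rfl, hm, ?_⟩
        rintro (_ | k) hk
        · refine ⟨⟨Equiv.swap (u i) (u j), ⟨u i, u j, hu.ne', rfl⟩, ?_⟩, ?_⟩
          · simp [h0, ← mul_assoc]
          · change invLen (Equiv.swap (u i) (u j) * u) < invLen (c 0)
            rw [h0]; omega
        · exact hc k (by omega)
      · rw [hd]; simp

lemma out_aux {n : ℕ} (w u : Equiv.Perm (Fin n)) (hle : BruhatLE u w)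
    (a b c : Fin n) (hb : (a, b) ∈ Eplus w u) (hc : (a, c) ∈ Eplus w u) (hbc : b < c) :
    False := by
  obtain ⟨⟨⟨i, j, hij, he, -, -⟩, hr⟩, hlt⟩ := hb
  obtain ⟨⟨hce, -⟩, hlt'⟩ := hc
  have hce' := hce
  obtain ⟨i', k, hik, he', -, hl⟩ := hce
  simp only [Prod.mk.injEq] at he he' hlt hlt'
  obtain ⟨rfl, rfl⟩ := he
  obtain ⟨hi, rfl⟩ := he'
  obtain rfl := u.injective hi
  apply hr
  refine ⟨u k, hce', down_path w u hle _ k j ?_ hbc le_rfl⟩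
  by_contra hkj
  have hjk : j < k := lt_of_le_of_ne (not_lt.1 hkj) (by rintro rfl; exact lt_irrefl _ hbc)
  exact no_between u i k hik hlt' hl j hij hjk hlt hbc

lemma in_aux {n : ℕ} (w u : Equiv.Perm (Fin n)) (hle : BruhatLE u w)
    (a b c : Fin n) (ha : (a, c) ∈ Eplus w u) (hb : (b, c) ∈ Eplus w u) (hab : a < b) :
    False := by
  obtain ⟨⟨⟨j, k, hjk, he, -, -⟩, hr⟩, hlt⟩ := hb
  obtain ⟨⟨hae, -⟩, hlt'⟩ := ha
  have hae' := hae
  obtain ⟨i, k', hik, he', -, hl⟩ := hae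
  simp only [Prod.mk.injEq] at he he' hlt hlt'
  obtain ⟨rfl, rfl⟩ := he
  obtain ⟨rfl, hk⟩ := he'
  obtain rfl := u.injective hk
  apply hr
  have hji : j < i := by
    by_contra hji
    have hij : i < j := lt_of_le_of_ne (not_lt.1 hji) (by rintro rfl; exact lt_irrefl _ hab)
    exact no_between u i k hik hlt' hl j hij hjk hab hlt
  obtain ⟨d, hd, hp⟩ := Relation.TransGen.head'_iff.1 (down_path w u hle _ j i hji hab le_rfl)
  exact ⟨d, hd, Relation.TransGen.tail' hp hae'⟩

theorem stmt3 {n : ℕ} (hn : 1 ≤ n) (w u : Equiv.Perm (Fin n)) (hle : BruhatLE u w)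
    (a b c : Fin n) :
    (((a, b) : Fin n × Fin n) ∈ Eplus w u → ((a, c) : Fin n × Fin n) ∈ Eplus w u → b = c) ∧
    (((a, c) : Fin n × Fin n) ∈ Eplus w u → ((b, c) : Fin n × Fin n) ∈ Eplus w u → a = b) := by
  refine ⟨fun h1 h2 => ?_, fun h1 h2 => ?_⟩
  · rcases lt_trichotomy b c with h | h | h
    · exact (out_aux w u hle a b c h1 h2 h).elim
    · exact h
    · exact (out_aux w u hle a c b h2 h1 h).elim
  · rcases lt_trichotomy a b with h | h | h
    · exact (in_aux w u hle a b c h1 h2 h).elim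
    · exact h
    · exact (in_aux w u hle b a c h2 h1 h).elim
end

section
/- Let u ≤ w in S_n. There exists a function f : {1,…,n} → ℝ such that f(p) = f(q) whenever (p,q) ∈ E_w(u)^+ and f(p) > f(q) whenever (p,q) ∈ E_w(u)^−. -/
open Equiv

section core
open Relation

variable {n : ℕ} (x : Fin n → Fin n) (R : Fin n → Fin n → Prop)

theorem core_mono (h1 : ∀ a b, R a b → x a < x b) {a b : Fin n} (h : TransGen R a b) :
    x a < x b := by
  induction h with
  | single h => exact h1 _ _ h
  | tail _ h ih => exact ih.trans (h1 _ _ h)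

/-- A path from `a` to `b` passing horizontally over `c`. -/
theorem core_path (hx : Function.Injective x)
    (h2 : ∀ a b, R a b → ∀ c, x a < x c → x c < x b → a < c → c < b → False)
    (h3 : ∀ a b, x a < x b → b < a → TransGen R a b)
    {a b : Fin n} (h : TransGen R a b) (c : Fin n) (hac : x a < x c) (hcb : x c < x b) :
    (∃ s, (s = a ∨ TransGen R a s) ∧ TransGen R s c ∧ c < s) ∨
    (∃ t, (t = b ∨ TransGen R t b) ∧ TransGen R c t ∧ t < c) ∨
    (TransGen R a c ∧ TransGen R c b) := by
  induction h with
  | @single b h =>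
    rcases lt_trichotomy a c with h4 | h4 | h4
    · rcases lt_trichotomy c b with h5 | h5 | h5
      · exact (h2 _ _ h c hac hcb h4 h5).elim
      · subst h5; exact absurd hcb (lt_irrefl _)
      · exact Or.inr (Or.inl ⟨b, Or.inl rfl, h3 _ _ hcb h5, h5⟩)
    · subst h4; exact absurd hac (lt_irrefl _)
    · exact Or.inl ⟨a, Or.inl rfl, h3 _ _ hac h4, h4⟩
  | @tail d b hd h ih =>
    rcases lt_trichotomy (x c) (x d) with h6 | h6 | h6
    · rcases ih h6 with h7 | ⟨t, h7, h8, h9⟩ | ⟨h7, h8⟩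
      · exact Or.inl h7
      · refine Or.inr (Or.inl ⟨t, Or.inr ?_, h8, h9⟩)
        rcases h7 with rfl | h7
        · exact TransGen.single h
        · exact h7.tail h
      · exact Or.inr (Or.inr ⟨h7, h8.tail h⟩)
    · have := hx h6
      subst this
      exact Or.inr (Or.inr ⟨hd, TransGen.single h⟩)
    · rcases lt_trichotomy d c with h4 | h4 | h4
      · rcases lt_trichotomy c b with h5 | h5 | h5
        · exact (h2 _ _ h c h6 hcb h4 h5).elim
        · subst h5; exact absurd hcb (lt_irrefl _)
        · exact Or.inr (Or.inl ⟨b, Or.inl rfl, h3 _ _ hcb h5, h5⟩)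
      · subst h4; exact absurd h6 (lt_irrefl _)
      · exact Or.inl ⟨d, Or.inr hd, h3 _ _ h6 h4, h4⟩

/-- The linear order used to define the height function. -/
def coreL (a b : Fin n) : Prop := TransGen R a b ∨ (¬ TransGen R b a ∧ b < a)

variable {x R}

theorem core_exists (hx : Function.Injective x)
    (h1 : ∀ a b, R a b → x a < x b)
    (h2 : ∀ a b, R a b → ∀ c, x a < x c → x c < x b → a < c → c < b → False)
    (h3 : ∀ a b, x a < x b → b < a → TransGen R a b) :
    ∃ f : Fin n → ℝ,
      (∀ a b, R a b → (∀ c, TransGen R a c → TransGen R c b → False) → a < b → f a = f b) ∧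
      (∀ a b, R a b → b < a → f b < f a) := by
  classical
  have mono : ∀ {a b}, TransGen R a b → x a < x b := fun h => core_mono x R h1 h
  have irr : ∀ a, ¬ TransGen R a a := fun a h => lt_irrefl _ (mono h)
  have tr : ∀ {a b c}, TransGen R a b → TransGen R b c → TransGen R a c :=
    fun h h' => h.trans h'
  have path := fun {a b} (h : TransGen R a b) => core_path x R hx h2 h3 h
  have inc : ∀ a b, ¬ TransGen R a b → ¬ TransGen R b a → b < a → x b < x a := by
    intro a b hab hba hlt
    rcases lt_trichotomy (x a) (x b) with h | h | h
    · exact absurd (h3 _ _ h hlt) hab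
    · exact absurd (hx h) hlt.ne'
    · exact h
  have path1 : ∀ a b c, TransGen R a b → x a < x c → x c < x b →
      TransGen R a c ∨ TransGen R c b := by
    intro a b c h hac hcb
    rcases path h c hac hcb with ⟨s, h4, h5, _⟩ | ⟨t, h4, h5, _⟩ | ⟨h4, _⟩
    · rcases h4 with rfl | h4
      · exact Or.inl h5
      · exact Or.inl (tr h4 h5)
    · rcases h4 with rfl | h4
      · exact Or.inr h5
      · exact Or.inr (tr h5 h4)
    · exact Or.inl h4
  have Lirr : ∀ a, ¬ coreL R a a := by
    rintro a (h | ⟨_, h⟩)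
    · exact irr a h
    · exact lt_irrefl _ h
  have Ltot : ∀ a b, a ≠ b → coreL R a b ∨ coreL R b a := by
    intro a b hne
    by_cases hab : TransGen R a b
    · exact Or.inl (Or.inl hab)
    by_cases hba : TransGen R b a
    · exact Or.inr (Or.inl hba)
    rcases lt_or_gt_of_ne hne with h | h
    · exact Or.inr (Or.inr ⟨hab, h⟩)
    · exact Or.inl (Or.inr ⟨hba, h⟩)
  have Lasymm : ∀ a b, coreL R a b → coreL R b a → False := by
    rintro a b (h | ⟨h, h'⟩) (g | ⟨g, g'⟩)
    · exact irr _ (tr h g)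
    · exact g h
    · exact h g
    · exact lt_asymm h' g'
  have Ltrans : ∀ a b c, coreL R a b → coreL R b c → coreL R a c := by
    intro a b c hab hbc
    by_cases hac : TransGen R a c
    · exact Or.inl hac
    by_cases hca : TransGen R c a
    · exfalso
      rcases hab with h | ⟨h, h'⟩
      · rcases hbc with g | ⟨g, g'⟩
        · exact irr _ (tr (tr h g) hca)
        · exact g (tr hca h)
      · rcases hbc with g | ⟨g, g'⟩
        · exact h (tr g hca)
        · by_cases k : TransGen R a b
          · exact g (tr hca k)
          by_cases k' : TransGen R b c
          · exact h (tr k' hca)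
          have e1 := inc a b k h h'
          have e2 := inc b c k' g g'
          rcases path1 c a b hca e2 e1 with e | e
          · exact g e
          · exact h e
    rcases lt_trichotomy c a with hlt | heq | hlt
    · exact Or.inr ⟨hca, hlt⟩
    · subst heq
      exact (Lasymm _ _ hab hbc).elim
    · exfalso
      have e0 := inc c a hca hac hlt
      rcases hab with h | ⟨h, h'⟩
      · rcases hbc with g | ⟨g, g'⟩
        · exact hac (tr h g)
        · by_cases k' : TransGen R b c
          · exact hac (tr h k')
          have e2 := inc b c k' g g'
          rcases path1 a b c h e0 e2 with e | e
          · exact hac e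
          · exact g e
      · rcases hbc with g | ⟨g, g'⟩
        · by_cases k : TransGen R a b
          · exact hac (tr k g)
          have e1 := inc a b k h h'
          rcases path1 b c a g e1 e0 with e | e
          · exact h e
          · exact hac e
        · exact lt_asymm hlt (g'.trans h')
  have cons : ∀ a b, R a b → (∀ c, TransGen R a c → TransGen R c b → False) → a < b →
      ∀ c, coreL R a c → coreL R c b → False := by
    intro a b hR hcov hlt c hac hcb
    have hab : TransGen R a b := TransGen.single hR
    rcases hac with h | ⟨h, h'⟩
    · rcases hcb with g | ⟨g, g'⟩
      · exact hcov c h g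
      · have k : ¬ TransGen R c b := fun k => hcov c h k
        have e := inc c b k g g'
        rcases path h b (mono hab) e with ⟨s, h4, h5, h6⟩ | ⟨t, h4, h5, h6⟩ | ⟨_, h4⟩
        · rcases h4 with rfl | h4
          · exact lt_asymm hlt h6
          · exact hcov s h4 h5
        · rcases h4 with rfl | h4
          · exact g h5
          · exact g (tr h5 h4)
        · exact g h4
    · rcases hcb with g | ⟨g, g'⟩
      · have k : ¬ TransGen R a c := fun k => hcov c k g
        have e := inc a c k h h'
        rcases path g a e (mono hab) with ⟨s, h4, h5, h6⟩ | ⟨t, h4, h5, h6⟩ | ⟨h4, _⟩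
        · rcases h4 with rfl | h4
          · exact h h5
          · exact h (tr h4 h5)
        · rcases h4 with rfl | h4
          · exact lt_asymm hlt h6
          · exact hcov t h5 h4
        · exact h h4
      · exact lt_asymm hlt (g'.trans h')
  let P : Fin n → Fin n → Prop := fun a b =>
    R a b ∧ (∀ c, TransGen R a c → TransGen R c b → False) ∧ a < b
  let S : Fin n → Finset (Fin n) := fun p =>
    Finset.univ.filter (fun y => (y = p ∨ coreL R y p) ∧ ¬ ∃ z, P z y)
  refine ⟨fun p => -((S p).card : ℝ), ?_, ?_⟩
  · intro a b hR hcov hlt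
    have hS : S a = S b := by
      ext y
      simp only [S, Finset.mem_filter, Finset.mem_univ, true_and]
      constructor
      · rintro ⟨h, hs⟩
        refine ⟨Or.inr ?_, hs⟩
        have hab : coreL R a b := Or.inl (TransGen.single hR)
        rcases h with rfl | h
        · exact hab
        · exact Ltrans _ _ _ h hab
      · rintro ⟨h, hs⟩
        refine ⟨?_, hs⟩
        rcases h with rfl | h
        · exact absurd ⟨a, hR, hcov, hlt⟩ hs
        · by_contra hc
          push Not at hc
          rcases Ltot y a hc.1 with k | k
          · exact hc.2 k
          · exact cons a b hR hcov hlt y k h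
    simp only [hS]
  · intro a b hR hlt
    have hab : coreL R a b := Or.inl (TransGen.single hR)
    have key : ∃ y, coreL R a y ∧ (y = b ∨ coreL R y b) ∧ ¬ ∃ z, P z y := by
      by_contra hno
      push Not at hno
      have : ∀ m : ℕ, ∀ y : Fin n, (y : ℕ) = m → coreL R a y → (y = b ∨ coreL R y b) → y < a →
          False := by
        intro m
        induction m using Nat.strong_induction_on with
        | _ m ih =>
          intro y hy hay hyb hya
          obtain ⟨z, hz1, hz2, hz3⟩ := hno y hay hyb
          have hzy : coreL R z y := Or.inl (TransGen.single hz1)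
          have hza : z < a := hz3.trans hya
          have haz : coreL R a z := by
            rcases Ltot a z hza.ne' with k | k
            · exact k
            · exact (cons z y hz1 hz2 hz3 a k hay).elim
          refine ih z (by rw [← hy]; exact hz3) z rfl haz (Or.inr ?_) hza
          rcases hyb with rfl | h
          · exact hzy
          · exact Ltrans _ _ _ hzy h
      exact this _ b rfl hab (Or.inl rfl) hlt
    obtain ⟨y, hay, hyb, hs⟩ := key
    have hss : S a ⊂ S b := by
      rw [Finset.ssubset_iff_of_subset]
      · refine ⟨y, ?_, ?_⟩
        · simp only [S, Finset.mem_filter, Finset.mem_univ, true_and]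
          exact ⟨hyb, hs⟩
        · simp only [S, Finset.mem_filter, Finset.mem_univ, true_and]
          rintro ⟨rfl | h, _⟩
          · exact Lirr _ hay
          · exact Lasymm _ _ h hay
      · intro z hz
        simp only [S, Finset.mem_filter, Finset.mem_univ, true_and] at hz ⊢
        refine ⟨Or.inr ?_, hz.2⟩
        rcases hz.1 with rfl | h
        · exact hab
        · exact Ltrans _ _ _ h hab
    have := Finset.card_lt_card hss
    have h' : ((S a).card : ℝ) < (S b).card := by exact_mod_cast this
    simpa using h'

end core

section len
variable {n : ℕ}

/-- The involution on pairs of positions comparing inversions before and after a swap. -/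
def swapPair (i j : Fin n) (p : Fin n × Fin n) : Fin n × Fin n :=
  if swap i j p.1 < swap i j p.2 then (swap i j p.1, swap i j p.2) else p

theorem swapPair_invol (i j : Fin n) (p : Fin n × Fin n) (hp : p.1 < p.2) :
    swapPair i j (swapPair i j p) = p := by
  unfold swapPair
  split_ifs with h1 h2 h2
  · simp
  · simp [hp] at h2
  · rfl

/-- Swapping an ascent increases the length. -/
theorem invLen_lt (v : Perm (Fin n)) (i j : Fin n) (hij : i < j) (hv : v i < v j) :
    invLen v + 1 ≤ invLen (swap (v i) (v j) * v) := by
  have hmul : swap (v i) (v j) * v = v * swap i j := by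
    rw [Equiv.mul_swap_eq_swap_mul]
  rw [hmul]
  unfold invLen
  rw [← Finset.card_image_of_injOn (f := swapPair i j)]
  · rw [← Finset.card_insert_of_notMem (a := (i, j))]
    · apply Finset.card_le_card
      intro p hp
      rw [Finset.mem_insert, Finset.mem_image] at hp
      rw [Finset.mem_filter]
      simp only [Finset.mem_univ, true_and, Perm.mul_apply]
      rcases hp with rfl | ⟨⟨a, b⟩, hq, rfl⟩
      · simpa using ⟨hij, hv⟩
      · simp only [Finset.mem_filter, Finset.mem_univ, true_and] at hq
        unfold swapPair
        split_ifs with h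
        · simpa using ⟨h, hq.2⟩
        · refine ⟨hq.1, ?_⟩
          simp only [swap_apply_def] at h ⊢
          grind
    · rw [Finset.mem_image]
      rintro ⟨⟨a, b⟩, hq, he⟩
      simp only [Finset.mem_filter, Finset.mem_univ, true_and] at hq
      have := swapPair_invol i j (a, b) hq.1
      rw [he] at this
      simp only [swapPair, swap_apply_left, swap_apply_right] at this
      rw [if_neg (by exact not_lt.2 hij.le)] at this
      simp only [Prod.mk.injEq] at this
      obtain ⟨rfl, rfl⟩ := this
      exact lt_asymm hv hq.2
  · intro p hp q hq hpq
    simp only [Finset.coe_filter, Finset.mem_univ, true_and, Set.mem_ofPred_eq] at hp hq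
    rw [← swapPair_invol i j p hp.1, hpq, swapPair_invol i j q hq.1]

theorem invLen_le (v : Perm (Fin n)) (i j : Fin n) (hij : i < j) (hv : v i < v j)
    (hemp : ∀ k, i < k → k < j → v i < v k → v k < v j → False) :
    invLen (swap (v i) (v j) * v) ≤ invLen v + 1 := by
  have hmul : swap (v i) (v j) * v = v * swap i j := by
    rw [Equiv.mul_swap_eq_swap_mul]
  rw [hmul]
  unfold invLen
  rw [← Finset.card_image_of_injOn (f := swapPair i j)
    (s := Finset.univ.filter fun p : Fin n × Fin n => p.1 < p.2 ∧ v p.2 < v p.1)]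
  · refine le_trans (Finset.card_le_card ?_) (Finset.card_insert_le (i, j) _)
    rintro ⟨a, b⟩ hp
    rw [Finset.mem_insert, Finset.mem_image]
    rw [Finset.mem_filter] at hp
    simp only [Finset.mem_univ, true_and, Perm.mul_apply] at hp
    by_cases he : (a, b) = (i, j)
    · exact Or.inl he
    refine Or.inr ⟨swapPair i j (a, b), ?_, swapPair_invol i j _ hp.1⟩
    simp only [Finset.mem_filter, Finset.mem_univ, true_and]
    unfold swapPair
    split_ifs with h
    · exact ⟨h, hp.2⟩
    · refine ⟨hp.1, ?_⟩
      have hinj : ∀ a b, v a = v b → a = b := fun a b h => v.injective h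
      simp only [swap_apply_def] at h hp ⊢
      simp only [Prod.mk.injEq] at he
      grind
  · intro p hp q hq hpq
    simp only [Finset.coe_filter, Finset.mem_univ, true_and, Set.mem_ofPred_eq] at hp hq
    rw [← swapPair_invol i j p hp.1, hpq, swapPair_invol i j q hq.1]

/-- If some point lies in the rectangle, the length jumps by at least three. -/
theorem invLen_lt3 (v : Perm (Fin n)) (i j k : Fin n) (hik : i < k) (hkj : k < j)
    (h1 : v i < v k) (h2 : v k < v j) :
    invLen v + 3 ≤ invLen (swap (v i) (v j) * v) := by
  have e1 := invLen_lt v i k hik h1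
  set v1 := swap (v i) (v k) * v with hv1
  have a1 : v1 i = v k := by simp [hv1]
  have a2 : v1 k = v i := by simp [hv1]
  have a3 : v1 j = v j := by
    simp only [hv1, Perm.mul_apply]
    exact swap_apply_of_ne_of_ne (h1.trans h2).ne' h2.ne'
  have e2 := invLen_lt v1 k j hkj (by rw [a2, a3]; exact h1.trans h2)
  rw [a2, a3] at e2
  set v2 := swap (v i) (v j) * v1 with hv2
  have b1 : v2 i = v k := by
    simp only [hv2, Perm.mul_apply, a1]
    exact swap_apply_of_ne_of_ne h1.ne' h2.ne
  have b2 : v2 k = v j := by simp [hv2, a2]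
  have e3 := invLen_lt v2 i k hik (by rw [b1, b2]; exact h2)
  rw [b1, b2] at e3
  have : swap (v k) (v j) * v2 = swap (v i) (v j) * v := by
    rw [hv2, hv1]
    ext y
    simp only [Perm.mul_apply, swap_apply_def]
    grind
  rw [this] at e3
  omega

end len

theorem BruhatLE_cons {n : ℕ} {u w : Perm (Fin n)} (h : BruhatLE u w) (a b : Fin n) (hab : a ≠ b)
    (hl : invLen (swap a b * u) < invLen u) : BruhatLE (swap a b * u) w := by
  obtain ⟨m, c, h0, hm, hc⟩ := h
  refine ⟨m + 1, fun k => Nat.casesOn k (swap a b * u) c, rfl, hm, ?_⟩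
  intro k hk
  cases k with
  | zero =>
    refine ⟨⟨swap a b, ⟨a, b, hab, rfl⟩, ?_⟩, ?_⟩
    · show c 0 = _
      rw [h0]; simp
    · show _ < invLen (c 0)
      rw [h0]; exact hl
  | succ k => exact hc k (by omega)

theorem stmt6 {n : ℕ} (hn : 1 ≤ n) (w u : Equiv.Perm (Fin n)) (hle : BruhatLE u w) :
    ∃ f : Fin n → ℝ,
      (∀ p ∈ Eplus w u, f p.1 = f p.2) ∧
      (∀ p ∈ Eminus w u, f p.2 < f p.1) := by
  have down : ∀ i j : Fin n, i < j → u j < u i →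
      (∀ k, i < k → k < j → u j < u k → u k < u i → False) → (u i, u j) ∈ Etilde w u := by
    intro i j hij hu hemp
    set v := swap (u i) (u j) * u with hv
    have a1 : v i = u j := by simp [hv]
    have a2 : v j = u i := by simp [hv]
    have hk : ∀ k, i < k → k < j → v k = u k := by
      intro k h1 h2
      simp only [hv, Perm.mul_apply]
      exact swap_apply_of_ne_of_ne (fun h => h1.ne' (u.injective h))
        (fun h => h2.ne (u.injective h))
    have hvu : swap (v i) (v j) * v = u := by
      rw [a1, a2, hv, swap_comm]; simp
    have e1 := invLen_lt v i j hij (by rw [a1, a2]; exact hu)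
    have e2 := invLen_le v i j hij (by rw [a1, a2]; exact hu) (by
      intro k h1 h2
      rw [a1, a2, hk k h1 h2]
      exact hemp k h1 h2)
    rw [hvu] at e1 e2
    refine ⟨i, j, hij, rfl, BruhatLE_cons hle _ _ hu.ne' ?_, ?_⟩
    · rw [← hv]; omega
    · rw [← hv]
      have : (invLen v : ℤ) - invLen u = -1 := by omega
      rw [this]; rfl
  have inj : Function.Injective (fun a => u⁻¹ a) := u⁻¹.injective
  obtain ⟨f, hf1, hf2⟩ := core_exists (x := fun a => u⁻¹ a)
    (R := fun a b => (a, b) ∈ Etilde w u) inj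
    (by
      rintro a b ⟨i, j, hij, he, -, -⟩
      simp only [Prod.mk.injEq] at he
      obtain ⟨rfl, rfl⟩ := he
      simpa using hij)
    (by
      rintro a b ⟨i, j, hij, he, -, hl⟩ c h1 h2 h3 h4
      simp only [Prod.mk.injEq] at he
      obtain ⟨rfl, rfl⟩ := he
      obtain ⟨k, rfl⟩ := u.surjective c
      have hk : ∀ y, u⁻¹ (u y) = y := fun y => u.symm_apply_apply y
      simp only [hk] at h1 h2
      have := invLen_lt3 u i j k h1 h2 h3 h4
      rw [abs_eq (by norm_num)] at hl
      omega)
    (by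
      have : ∀ m : ℕ, ∀ i j : Fin n, (j : ℕ) - i = m → i < j → u j < u i →
          Relation.TransGen (fun a b => (a, b) ∈ Etilde w u) (u i) (u j) := by
        intro m
        induction m using Nat.strong_induction_on with
        | _ m ih =>
          intro i j hm hij hu
          by_cases hemp : ∀ k, i < k → k < j → u j < u k → u k < u i → False
          · exact Relation.TransGen.single (down i j hij hu hemp)
          · push Not at hemp
            obtain ⟨k, h1, h2, h3, h4, -⟩ := hemp
            exact (ih _ (by omega) i k rfl h1 h4).trans (ih _ (by omega) k j rfl h2 h3)
      intro a b hab hlt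
      have := this _ (u⁻¹ a) (u⁻¹ b) rfl hab (by simpa using hlt)
      simpa using this)
  refine ⟨f, ?_, ?_⟩
  · rintro ⟨a, b⟩ ⟨⟨hE, hno⟩, hlt⟩
    refine hf1 a b hE ?_ hlt
    intro c hac hcb
    apply hno
    obtain ⟨d, had, hdc⟩ := Relation.TransGen.head'_iff.1 hac
    exact ⟨d, had, Relation.TransGen.trans_right hdc hcb⟩
  · rintro ⟨a, b⟩ ⟨⟨hE, hno⟩, hlt⟩
    exact hf2 a b hE hlt
end
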